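/- Let V ⊆ ℝⁿ and W ⊆ ℝᵐ be real algebraic sets, with coordinate ring ℝ[V] = ℝ[x₁,…,xₙ]/I(V), and let π : V(ℝ) → W(ℝ) be a proper algebraic map (preimages of compact sets are compact for the Euclidean topologies). Then there exist constants c, d ∈ ℕ such that for every v ∈ V(ℝ) and every coordinate function xᵢ one has |xᵢ(v)| ≤ c(1 + N(π(v))²)ᵈ, where N(s) = √(s₁² + ⋯ + sₘ²) is the Euclidean norm. -/

import Mathlib

open MvPolynomial in
theorem aux_mem {K : Type*} [Field K] {n : ℕ} (P : Fin n → MvPolynomial (Fin n) K)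
    (c : Fin n → K) (hc : ∀ i, c i ≠ 0) (e : ℕ)
    (h : ∀ i, (P i - C (c i) * X i ^ e).totalDegree < e) (d : ℕ) :
    ∀ p : MvPolynomial (Fin n) K, p.totalDegree ≤ d →
      p ∈ restrictTotalDegree (Fin n) K (n * (e - 1)) ⊔
        (Ideal.span (Set.range P)).restrictScalars K := by
  induction d using Nat.strong_induction_on with
  | _ d ih =>
  intro p hp
  rw [p.as_sum]
  refine Submodule.sum_mem _ fun m hm => ?_
  have hmd : m.degree ≤ d := (le_totalDegree hm).trans hp
  by_cases hN : m.degree ≤ n * (e - 1)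
  · apply Submodule.mem_sup_left
    rw [mem_restrictTotalDegree]
    exact (totalDegree_monomial_le _ _).trans hN
  · obtain ⟨i, hi⟩ : ∃ i, e ≤ m i := by
      by_contra! hcon
      apply hN
      rw [Finsupp.degree_eq_sum]
      calc ∑ i, m i ≤ ∑ i : Fin n, (e - 1) := Finset.sum_le_sum fun i _ => by have := hcon i; omega
        _ = _ := by simp
    set m' := m - Finsupp.single i e with hm'
    have hmm : m = m' + Finsupp.single i e := by
      rw [hm', tsub_add_cancel_of_le]
      simpa using hi
    have hdeg : m.degree = m'.degree + e := by
      rw [hmm]; simp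
    have hE : monomial m (coeff m p) = monomial m' (coeff m p / c i) * P i -
        monomial m' (coeff m p / c i) * (P i - C (c i) * X i ^ e) := by
      have : C (c i) * X i ^ e = monomial (Finsupp.single i e) (c i) := by
        rw [C_mul_X_pow_eq_monomial]
      rw [← mul_sub, sub_sub_cancel, this, monomial_mul, ← hmm, div_mul_cancel₀ _ (hc i)]
    rw [hE]
    refine Submodule.sub_mem _ ?_ ?_
    · apply Submodule.mem_sup_right
      exact Ideal.mul_mem_left _ _ (Ideal.subset_span ⟨i, rfl⟩)
    · refine ih (m'.degree + (e - 1)) ?_ _ ?_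
      · have := h i
        omega
      · refine (totalDegree_mul _ _).trans ?_
        have := h i
        exact add_le_add (totalDegree_monomial_le _ _) (by omega)

open MvPolynomial in
theorem aux_finite {K : Type*} [Field K] {n : ℕ} (P : Fin n → MvPolynomial (Fin n) K)
    (c : Fin n → K) (hc : ∀ i, c i ≠ 0) (e : ℕ)
    (h : ∀ i, (P i - C (c i) * X i ^ e).totalDegree < e) :
    Module.Finite K (MvPolynomial (Fin n) K ⧸ Ideal.span (Set.range P)) := by
  refine Module.Finite.of_surjective (((Ideal.Quotient.mkₐ K (Ideal.span (Set.range P))).toLinearMap).domRestrict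
    (restrictTotalDegree (Fin n) K (n * (e - 1)))) ?_
  intro x
  obtain ⟨p, rfl⟩ := Ideal.Quotient.mk_surjective x
  obtain ⟨a, ha, b, hb, hab⟩ := Submodule.mem_sup.1 (aux_mem P c hc e h _ p le_rfl)
  refine ⟨⟨a, ha⟩, ?_⟩
  simp only [LinearMap.domRestrict_apply, AlgHom.toLinearMap_apply, Ideal.Quotient.mkₐ_eq_mk]
  rw [Ideal.Quotient.eq, ← hab]
  have hb' : b ∈ Ideal.span (Set.range P) := hb
  simpa using hb'

open MvPolynomial in
theorem aux_alg0 {R : Type*} [CommRing R] [IsDomain R] (K : Type*) [Field K] [Algebra R K]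
    [IsFractionRing R K] {n : ℕ} (P : Fin n → MvPolynomial (Fin n) R)
    (c : Fin n → R) (hc : ∀ i, c i ≠ 0) (e : ℕ)
    (h : ∀ i, (P i - C (c i) * X i ^ e).totalDegree < e) (E : MvPolynomial (Fin n) R) :
    ∃ g : Polynomial R, g ≠ 0 ∧ Polynomial.aeval E g ∈ Ideal.span (Set.range P) := by
  have hinj : Function.Injective (algebraMap R K) := IsFractionRing.injective R K
  let φ : MvPolynomial (Fin n) R →+* MvPolynomial (Fin n) K := MvPolynomial.map (algebraMap R K)
  have hφ : Function.Injective φ := map_injective _ hinj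
  let P' : Fin n → MvPolynomial (Fin n) K := fun i => φ (P i)
  have hfin : Module.Finite K (MvPolynomial (Fin n) K ⧸ Ideal.span (Set.range P')) := by
    refine aux_finite P' (fun i => algebraMap R K (c i)) (fun i => ?_) e (fun i => ?_)
    · simpa using hc i
    · have : P' i - C (algebraMap R K (c i)) * X i ^ e = φ (P i - C (c i) * X i ^ e) := by
        simp [P', φ]
      rw [this]
      exact lt_of_le_of_lt (Finset.sup_mono (support_map_subset _ _)) (h i)
  have hint : IsIntegral K (Ideal.Quotient.mk (Ideal.span (Set.range P')) (φ E)) :=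
    Algebra.IsIntegral.isIntegral _
  have halg : IsAlgebraic R (Ideal.Quotient.mk (Ideal.span (Set.range P')) (φ E)) :=
    (IsFractionRing.isAlgebraic_iff R K _).2 hint.isAlgebraic
  obtain ⟨g, hg0, hg⟩ := halg
  have h1 : φ (Polynomial.aeval E g) ∈ Ideal.span (Set.range P') := by
    rw [← Ideal.Quotient.eq_zero_iff_mem, ← hg]
    rw [Polynomial.aeval_def, Polynomial.aeval_def, Polynomial.hom_eval₂, Polynomial.hom_eval₂]
    congr 1
    ext x
    simp [φ, IsScalarTower.algebraMap_apply R K (MvPolynomial (Fin n) K ⧸ Ideal.span (Set.range P'))]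
    rfl
  let _ := MvPolynomial.algebraMvPolynomial (σ := Fin n) (R := R) (S := K)
  have h2 : Ideal.span (Set.range P') = (Ideal.span (Set.range P)).map
      (algebraMap (MvPolynomial (Fin n) R) (MvPolynomial (Fin n) K)) := by
    rw [Ideal.map_span, ← Set.range_comp]
    rfl
  rw [h2] at h1
  obtain ⟨⟨a, b⟩, hab⟩ := (IsLocalization.mem_map_algebraMap_iff
    ((nonZeroDivisors R).map (C (σ := Fin n))) (MvPolynomial (Fin n) K)).1 h1
  obtain ⟨b, ⟨b0, hb0, rfl⟩⟩ := b
  refine ⟨Polynomial.C b0 * g, mul_ne_zero ?_ hg0, ?_⟩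
  · simpa using nonZeroDivisors.ne_zero hb0
  · have : φ (Polynomial.aeval E g * C b0) = φ a := by
      rw [map_mul]
      exact hab
    have := hφ this
    rw [map_mul, Polynomial.aeval_C, mul_comm]
    change _ * C b0 ∈ _
    rw [this]
    exact a.2

open MvPolynomial in
theorem aux_alg {R : Type*} [CommRing R] [IsDomain R] {n : ℕ} (P : Fin n → MvPolynomial (Fin n) R)
    (c : Fin n → R) (hc : ∀ i, c i ≠ 0) (e : ℕ)
    (h : ∀ i, (P i - C (c i) * X i ^ e).totalDegree < e) (E : MvPolynomial (Fin n) R) :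
    ∃ g : Polynomial R, g ≠ 0 ∧ Polynomial.aeval E g ∈ Ideal.span (Set.range P) :=
  aux_alg0 (FractionRing R) P c hc e h E

theorem aux_hasDeriv {n : ℕ} (p : MvPolynomial (Fin n) ℝ) (v : Fin n → ℝ) (i : Fin n) (x : ℝ) :
    HasDerivAt (fun x => MvPolynomial.eval (Function.update v i x) p)
      (MvPolynomial.eval (Function.update v i x) (MvPolynomial.pderiv i p)) x := by
  induction p using MvPolynomial.induction_on with
  | C a => simpa using hasDerivAt_const x a
  | add p q hp hq =>
    simp only [map_add]
    exact hp.add hq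
  | mul_X p j hp =>
    have hX : HasDerivAt (fun x => Function.update v i x j)
        (MvPolynomial.eval (Function.update v i x) (MvPolynomial.pderiv i (MvPolynomial.X j))) x := by
      by_cases hij : j = i
      · subst hij
        simpa using hasDerivAt_id' x
      · simpa [hij, MvPolynomial.pderiv_X_of_ne hij] using hasDerivAt_const x (v j)
    have := hp.mul hX
    simp only [map_mul, MvPolynomial.eval_X, MvPolynomial.pderiv_mul, map_add]
    exact this

theorem aux_crit {n : ℕ} (p : MvPolynomial (Fin n) ℝ) (v : Fin n → ℝ)
    (hv : ∀ w, MvPolynomial.eval v p ≤ MvPolynomial.eval w p) (i : Fin n) :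
    MvPolynomial.eval v (MvPolynomial.pderiv i p) = 0 := by
  have h := aux_hasDeriv p v i (v i)
  rw [Function.update_eq_self] at h
  refine IsLocalMin.hasDerivAt_eq_zero (Filter.Eventually.of_forall fun x => ?_) h
  simpa using hv _

/-- Evaluation of a polynomial in two variables. -/
noncomputable def evHom (r s : ℝ) : Polynomial (Polynomial ℝ) →+* ℝ :=
  Polynomial.eval₂RingHom (Polynomial.evalRingHom r) s

/-- The penalised functional. -/
noncomputable def pen {n : ℕ} (Q F : MvPolynomial (Fin n) ℝ) (D : ℕ) (r s : ℝ) (v : Fin n → ℝ) : ℝ :=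
  s * MvPolynomial.eval v Q + MvPolynomial.eval v F + (∑ i, v i ^ 2 - r) ^ 2
    + s ^ 2 * ∑ i, v i ^ (2 * (D + 1))

theorem aux_rel0 {R : Type*} [CommRing R] [IsDomain R] [CharZero R] {n : ℕ}
    (L : MvPolynomial (Fin n) R) (y : R) (hy : y ≠ 0) :
    ∃ D : ℕ, ∃ g : Polynomial R, g ≠ 0 ∧
      Polynomial.aeval (L + MvPolynomial.C y * ∑ i, MvPolynomial.X i ^ (2 * (D + 1))) g ∈
      Ideal.span (Set.range fun i => MvPolynomial.pderiv i
        (L + MvPolynomial.C y * ∑ i, MvPolynomial.X i ^ (2 * (D + 1)))) := by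
  obtain ⟨D, hD⟩ : ∃ D : ℕ, ∀ i, (MvPolynomial.pderiv i L).totalDegree ≤ D :=
    ⟨∑ i, (MvPolynomial.pderiv i L).totalDegree, fun i =>
      Finset.single_le_sum (f := fun i => (MvPolynomial.pderiv i L).totalDegree)
          (fun _ _ => Nat.zero_le _) (Finset.mem_univ i)⟩
  refine ⟨D, ?_⟩
  generalize hE : L + MvPolynomial.C y * ∑ i, MvPolynomial.X i ^ (2 * (D + 1)) = E
  have hpd : ∀ i, MvPolynomial.pderiv i E = MvPolynomial.pderiv i L +
      MvPolynomial.C (y * ((2 * (D + 1) : ℕ) : R)) * MvPolynomial.X i ^ (2 * D + 1) := by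
    intro i
    rw [← hE]
    simp only [map_add, MvPolynomial.pderiv_C_mul, map_sum, MvPolynomial.pderiv_pow]
    congr 1
    rw [Finset.sum_eq_single i]
    · rw [MvPolynomial.pderiv_X_self, show 2 * (D + 1) - 1 = 2 * D + 1 by omega]
      simp only [map_mul, map_natCast]
      ring
    · intro j _ hj
      rw [MvPolynomial.pderiv_X_of_ne hj, mul_zero]
    · simp
  refine aux_alg (fun i => MvPolynomial.pderiv i E)
    (fun _ => y * ((2 * (D + 1) : ℕ) : R))
    (fun _ => mul_ne_zero hy (Nat.cast_ne_zero.2 (by omega))) (2 * D + 1)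
    (fun i => ?_) E
  rw [hpd, add_sub_cancel_right]
  have := hD i
  omega

theorem aux_rel {n : ℕ} (Q F : MvPolynomial (Fin n) ℝ) :
    ∃ D : ℕ, ∃ g : Polynomial (Polynomial (Polynomial ℝ)), g ≠ 0 ∧
      ∀ (r s : ℝ) (v : Fin n → ℝ), (∀ w, pen Q F D r s v ≤ pen Q F D r s w) →
        Polynomial.eval₂ (evHom r s) (pen Q F D r s v) g = 0 := by
  let ι : MvPolynomial (Fin n) ℝ →+* MvPolynomial (Fin n) (Polynomial (Polynomial ℝ)) :=
    MvPolynomial.map ((Polynomial.C : Polynomial ℝ →+* _).comp Polynomial.C)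
  let L : MvPolynomial (Fin n) (Polynomial (Polynomial ℝ)) :=
    MvPolynomial.C Polynomial.X * ι Q + ι F
      + (∑ i, MvPolynomial.X i ^ 2 - MvPolynomial.C (Polynomial.C (Polynomial.X : Polynomial ℝ))) ^ 2
  obtain ⟨D, g, hg0, hg⟩ := aux_rel0 L (Polynomial.X ^ 2) (pow_ne_zero _ Polynomial.X_ne_zero)
  generalize hE : L + MvPolynomial.C (Polynomial.X ^ 2) *
    ∑ i, MvPolynomial.X i ^ (2 * (D + 1)) = E at hg
  refine ⟨D, g, hg0, fun r s v hv => ?_⟩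
  have hpen : ∀ w, MvPolynomial.eval w (MvPolynomial.map (evHom r s) E) = pen Q F D r s w := by
    intro w
    have hι : ∀ p, MvPolynomial.map (evHom r s) (ι p) = p := by
      intro p
      simp only [ι, MvPolynomial.map_map]
      convert MvPolynomial.map_id p
      ext x
      simp [evHom]
    rw [← hE]
    simp only [L, map_add, map_mul, map_pow, map_sub, map_sum, hι, MvPolynomial.map_C,
      MvPolynomial.map_X, MvPolynomial.eval_C, MvPolynomial.eval_X, pen]
    simp [evHom]
  let ev : MvPolynomial (Fin n) (Polynomial (Polynomial ℝ)) →+* ℝ :=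
    (MvPolynomial.eval v).comp (MvPolynomial.map (evHom r s))
  have hzero : ∀ x ∈ Ideal.span (Set.range fun i => MvPolynomial.pderiv i E), ev x = 0 := by
    intro x hx
    have : Ideal.span (Set.range fun i => MvPolynomial.pderiv i E) ≤ RingHom.ker ev := by
      rw [Ideal.span_le]
      rintro _ ⟨i, rfl⟩
      change ev _ = 0
      simp only [ev, RingHom.comp_apply, ← MvPolynomial.pderiv_map]
      apply aux_crit
      intro w
      rw [hpen, hpen]
      exact hv w
    exact this hx
  have h0 := hzero _ hg
  rw [Polynomial.aeval_def, Polynomial.hom_eval₂] at h0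
  rw [← hpen v]
  rw [← h0]
  congr 1
  ext x <;> simp [ev]

theorem aux_swap {A : Type*} [CommRing A] (ρ : A →+* ℝ) (s t : ℝ) (p : Polynomial (Polynomial A)) :
    Polynomial.eval₂ (Polynomial.eval₂RingHom ρ s) t p =
    Polynomial.eval₂ (Polynomial.eval₂RingHom ρ t) s (Polynomial.Bivariate.swap p) := by
  have : (Polynomial.eval₂RingHom (Polynomial.eval₂RingHom ρ s) t) =
    (Polynomial.eval₂RingHom (Polynomial.eval₂RingHom ρ t) s).comp
      (Polynomial.Bivariate.swap (R := A) : _ →+* Polynomial (Polynomial A)) := by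
    ext x <;> simp [Polynomial.Bivariate.swap_apply]
  exact DFunLike.congr_fun this p

theorem aux_cont {A : Type*} [CommRing A] (ρ : A →+* ℝ) (p : Polynomial (Polynomial A)) :
    Continuous fun x : ℝ × ℝ =>
      Polynomial.eval₂ (Polynomial.eval₂RingHom ρ x.1) x.2 p := by
  induction p using Polynomial.induction_on' with
  | add p q hp hq =>
    simp only [Polynomial.eval₂_add]
    exact hp.add hq
  | monomial k a =>
    simp only [Polynomial.eval₂_monomial, Polynomial.coe_eval₂RingHom]
    refine Continuous.mul ?_ (by fun_prop)
    simp only [Polynomial.eval₂_eq_sum_range]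
    fun_prop

theorem aux_limit (g : Polynomial (Polynomial (Polynomial ℝ))) (hg : g ≠ 0) :
    ∃ G : Polynomial (Polynomial ℝ), G ≠ 0 ∧ ∀ (r f : ℝ) (s t : ℕ → ℝ), (∀ k, s k ≠ 0) →
      Filter.Tendsto s Filter.atTop (nhds 0) → Filter.Tendsto t Filter.atTop (nhds f) →
      (∀ k, Polynomial.eval₂ (evHom r (s k)) (s k * t k) g = 0) → evHom r f G = 0 := by
  let g1 : Polynomial (Polynomial (Polynomial ℝ)) := g.comp (Polynomial.C Polynomial.X * Polynomial.X)
  have hg1 : g1 ≠ 0 := by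
    intro h
    exact hg ((Polynomial.comp_C_mul_X_eq_zero_iff
      (mem_nonZeroDivisors_of_ne_zero Polynomial.X_ne_zero)).1 h)
  let g2 := Polynomial.Bivariate.swap g1
  have hg2 : g2 ≠ 0 := by simpa [g2] using hg1
  obtain ⟨h, hh, hnd⟩ := Polynomial.exists_eq_pow_rootMultiplicity_mul_and_not_dvd g2 hg2 0
  rw [Polynomial.C_0, sub_zero] at hh hnd
  refine ⟨h.coeff 0, fun h0 => hnd (Polynomial.X_dvd_iff.2 h0), ?_⟩
  intro r f s t hs hs0 ht hz
  have hk : ∀ k, Polynomial.eval₂ (evHom r (t k)) (s k) h = 0 := by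
    intro k
    have h1 : Polynomial.eval₂ (evHom r (s k)) (t k) g1 = 0 := by
      rw [← hz k]
      simp only [g1, Polynomial.eval₂_comp]
      simp [evHom]
    have h2 : Polynomial.eval₂ (evHom r (t k)) (s k) g2 = 0 := by
      rw [← h1]
      exact (aux_swap _ _ _ _).symm
    rw [hh, Polynomial.eval₂_mul, Polynomial.eval₂_X_pow] at h2
    exact (mul_eq_zero.1 h2).resolve_left (pow_ne_zero _ (hs k))
  have hc := (aux_cont (Polynomial.evalRingHom r) h).tendsto (f, 0)
  have hl := hc.comp (ht.prodMk_nhds hs0)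
  have hl2 : Filter.Tendsto (fun _ : ℕ => (0 : ℝ)) Filter.atTop
      (nhds (Polynomial.eval₂ (evHom r f) 0 h)) := by
    refine hl.congr fun k => ?_
    exact hk k
  have := tendsto_nhds_unique hl2 tendsto_const_nhds
  rw [Polynomial.eval₂_at_zero] at this
  exact this

theorem aux_polybd (p : Polynomial ℝ) : ∃ C : ℝ, 0 ≤ C ∧ ∀ d ≥ p.natDegree, ∀ t : ℝ, 0 ≤ t →
    |p.eval t| ≤ C * (1 + t) ^ d := by
  refine ⟨∑ i ∈ Finset.range (p.natDegree + 1), |p.coeff i|, by positivity, fun d hd t ht => ?_⟩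
  rw [Polynomial.eval_eq_sum_range, Finset.sum_mul]
  refine (Finset.abs_sum_le_sum_abs _ _).trans (Finset.sum_le_sum fun i hi => ?_)
  rw [abs_mul]
  gcongr
  rw [abs_of_nonneg (by positivity)]
  have := Finset.mem_range.1 hi
  calc t ^ i ≤ (1 + t) ^ i := by gcongr; linarith
    _ ≤ (1 + t) ^ d := pow_le_pow_right₀ (by linarith) (by omega)

theorem aux_lower (p : Polynomial ℝ) (hp : p ≠ 0) : ∃ δ > 0, ∃ T : ℝ, ∀ t ≥ T, δ ≤ |p.eval t| := by
  by_cases hd : 0 < p.degree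
  · obtain ⟨T, hT⟩ := Filter.eventually_atTop.1 ((p.abs_tendsto_atTop hd).eventually_ge_atTop 1)
    exact ⟨1, one_pos, T, hT⟩
  · have := Polynomial.eq_C_of_degree_le_zero (not_lt.1 hd)
    refine ⟨|p.coeff 0|, abs_pos.2 fun h => hp ?_, 0, fun t _ => ?_⟩
    · rw [this, h, Polynomial.C_0]
    · rw [this]; simp

theorem aux_root (G : Polynomial (Polynomial ℝ)) (hG : G ≠ 0) :
    ∃ (C T : ℝ) (d : ℕ), 0 ≤ C ∧ ∀ r t : ℝ, T ≤ t → 0 ≤ t → evHom r t G = 0 →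
      r ≤ C * (1 + t) ^ d := by
  let H := Polynomial.Bivariate.swap G
  have hH : H ≠ 0 := by simpa [H] using hG
  obtain ⟨δ, hδ, T, hT⟩ := aux_lower H.leadingCoeff (by simpa using hH)
  choose C hC0 hC using fun k => aux_polybd (H.coeff k)
  let d := ∑ k ∈ Finset.range H.natDegree, (H.coeff k).natDegree
  let S := ∑ k ∈ Finset.range H.natDegree, C k
  have hS : 0 ≤ S := Finset.sum_nonneg fun k _ => hC0 k
  refine ⟨1 + S / δ, T, d, by positivity, fun r t hTt ht hz => ?_⟩
  have hpow : 1 ≤ (1 + t) ^ d := one_le_pow₀ (by linarith)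
  by_cases hr : r ≤ 1
  · have : 0 ≤ S / δ := by positivity
    nlinarith
  push Not at hr
  have hz' : ∑ k ∈ Finset.range (H.natDegree + 1), (H.coeff k).eval t * r ^ k = 0 := by
    have h1 : evHom t r H = 0 := by
      rw [← hz]
      have := aux_swap (RingHom.id ℝ) t r H
      have e : Polynomial.Bivariate.swap H = G := Polynomial.Bivariate.swap_swap_apply G
      rw [e] at this
      exact this
    rw [← h1]
    simp [evHom, Polynomial.eval₂_eq_sum_range]
  rw [Finset.sum_range_succ] at hz'
  have hb : ∀ k ∈ Finset.range H.natDegree,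
      |(H.coeff k).eval t * r ^ k| ≤ C k * (1 + t) ^ d * r ^ (H.natDegree - 1) := by
    intro k hk
    rw [abs_mul, abs_of_nonneg (by positivity : 0 ≤ r ^ k)]
    have := Finset.mem_range.1 hk
    refine mul_le_mul (hC k d ?_ t ht) (pow_le_pow_right₀ hr.le (by omega)) (by positivity)
      (mul_nonneg (hC0 k) (by positivity))
    exact Finset.single_le_sum (f := fun k => (H.coeff k).natDegree)
      (fun _ _ => Nat.zero_le _) hk
  have hsum := (Finset.abs_sum_le_sum_abs _ _).trans (Finset.sum_le_sum hb)
  rw [← Finset.sum_mul, ← Finset.sum_mul] at hsum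
  have hlead : |∑ k ∈ Finset.range H.natDegree, (H.coeff k).eval t * r ^ k|
      = |(H.leadingCoeff).eval t| * r ^ H.natDegree := by
    rw [eq_neg_of_add_eq_zero_left hz', abs_neg, abs_mul,
      abs_of_nonneg (by positivity : 0 ≤ r ^ H.natDegree)]
    rfl
  have hl := hT t hTt
  have hr0 : 0 < r := by linarith
  rw [hlead] at hsum
  rcases Nat.eq_zero_or_pos H.natDegree with h0 | h0
  · rw [h0] at hsum
    simp at hsum
    rw [hsum] at hl
    simp at hl
    linarith
  · obtain ⟨N, hN⟩ : ∃ N, H.natDegree = N + 1 := ⟨_, (Nat.succ_pred_eq_of_pos h0).symm⟩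
    have h3 : δ * r * r ^ N ≤ S * (1 + t) ^ d * r ^ N := by
      calc δ * r * r ^ N = δ * r ^ (N + 1) := by ring
        _ ≤ |(H.leadingCoeff).eval t| * r ^ (N + 1) := by gcongr
        _ ≤ _ := by rw [hN] at hsum; simpa [S, hN] using hsum
    have h4 := le_of_mul_le_mul_right h3 (by positivity)
    have h5 : r ≤ S / δ * (1 + t) ^ d := by
      rw [div_mul_eq_mul_div, le_div_iff₀ hδ]; linarith
    nlinarith

theorem aux_ball_compact {n : ℕ} (ρ : ℝ) : IsCompact {v : Fin n → ℝ | ∑ i, v i ^ 2 ≤ ρ} := by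
  refine Metric.isCompact_of_isClosed_isBounded (isClosed_le (by fun_prop) (by fun_prop)) ?_
  refine (Metric.isBounded_closedBall (x := (0 : Fin n → ℝ)) (r := 1 + |ρ|)).subset fun v hv => ?_
  rw [mem_closedBall_zero_iff, pi_norm_le_iff_of_nonneg (by positivity)]
  intro i
  have h1 : v i ^ 2 ≤ ∑ i, v i ^ 2 :=
    Finset.single_le_sum (f := fun i => v i ^ 2) (fun _ _ => sq_nonneg _) (Finset.mem_univ i)
  have h2 : v i ^ 2 ≤ |ρ| := h1.trans (le_trans hv (le_abs_self ρ))
  rw [Real.norm_eq_abs, abs_le]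
  have := abs_nonneg ρ
  constructor <;> nlinarith

theorem aux_pen_lower {n : ℕ} (Q F : MvPolynomial (Fin n) ℝ)
    (hQ : ∀ v, 0 ≤ MvPolynomial.eval v Q) (D : ℕ) (r s : ℝ) (v : Fin n → ℝ) :
    s * MvPolynomial.eval v Q + MvPolynomial.eval v F + (∑ i, v i ^ 2 - r) ^ 2 ≤
      pen Q F D r s v := by
  have : 0 ≤ s ^ 2 * ∑ i, v i ^ (2 * (D + 1)) :=
    mul_nonneg (sq_nonneg _) (Finset.sum_nonneg fun i _ => by
      rw [pow_mul]; positivity)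
  unfold pen
  linarith

theorem aux_pen_min {n : ℕ} (Q F : MvPolynomial (Fin n) ℝ)
    (hQ : ∀ v, 0 ≤ MvPolynomial.eval v Q) (hF : ∀ v, 0 ≤ MvPolynomial.eval v F)
    (D : ℕ) (r s : ℝ) (hs : 0 < s) : ∃ v, ∀ w, pen Q F D r s v ≤ pen Q F D r s w := by
  have hcont : Continuous (pen Q F D r s) := by
    unfold pen
    have := MvPolynomial.continuous_eval Q
    have := MvPolynomial.continuous_eval F
    fun_prop
  have h0 : 0 ≤ pen Q F D r s 0 := by
    refine le_trans ?_ (aux_pen_lower Q F hQ D r s 0)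
    have := hQ 0
    have := hF 0
    positivity
  obtain ⟨v, hv, hmin⟩ := (aux_ball_compact (n := n) (|r| + 1 + pen Q F D r s 0)).exists_isMinOn
    ⟨0, by simp; positivity⟩ hcont.continuousOn
  refine ⟨v, fun w => ?_⟩
  by_cases hw : ∑ i, w i ^ 2 ≤ |r| + 1 + pen Q F D r s 0
  · exact hmin hw
  · push Not at hw
    have h1 : pen Q F D r s v ≤ pen Q F D r s 0 := hmin (by simp; positivity)
    have h2 := aux_pen_lower Q F hQ D r s w
    have h3 := mul_nonneg hs.le (hQ w)
    have h4 := hF w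
    have h5 := le_abs_self r
    nlinarith

theorem aux_G {n : ℕ} (Q F : MvPolynomial (Fin n) ℝ)
    (hQ : ∀ v, 0 ≤ MvPolynomial.eval v Q) (hF : ∀ v, 0 ≤ MvPolynomial.eval v F) :
    ∃ G : Polynomial (Polynomial ℝ), G ≠ 0 ∧ ∀ u : Fin n → ℝ, MvPolynomial.eval u F = 0 →
      (∀ w, MvPolynomial.eval w F = 0 → ∑ i, w i ^ 2 = ∑ i, u i ^ 2 →
        MvPolynomial.eval u Q ≤ MvPolynomial.eval w Q) →
      evHom (∑ i, u i ^ 2) (MvPolynomial.eval u Q) G = 0 := by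
  obtain ⟨D, g, hg0, hg⟩ := aux_rel Q F
  obtain ⟨G, hG0, hG⟩ := aux_limit g hg0
  refine ⟨G, hG0, fun u huF humin => ?_⟩
  set r := ∑ i, u i ^ 2 with hr
  set f := MvPolynomial.eval u Q with hf
  let s : ℕ → ℝ := fun k => 1 / ((k : ℝ) + 1)
  have hs0 : ∀ k, 0 < s k := fun k => by positivity
  have hs1 : ∀ k, s k ≤ 1 := fun k => by
    simp only [s]
    rw [div_le_one (by positivity)]
    have : (0 : ℝ) ≤ k := Nat.cast_nonneg k
    linarith
  have hslim : Filter.Tendsto s Filter.atTop (nhds 0) := tendsto_one_div_add_atTop_nhds_zero_nat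
  choose v hv using fun k => aux_pen_min Q F hQ hF D r (s k) (hs0 k)
  set K := ∑ i, u i ^ (2 * (D + 1)) with hK
  have hK0 : 0 ≤ K := Finset.sum_nonneg fun i _ => by rw [pow_mul]; positivity
  have hf0 : 0 ≤ f := hQ u
  let t : ℕ → ℝ := fun k => pen Q F D r (s k) (v k) / s k
  have hst : ∀ k, s k * t k = pen Q F D r (s k) (v k) := fun k => by
    simp only [t]
    rw [mul_div_cancel₀ _ (hs0 k).ne']
  have hup : ∀ k, t k ≤ f + s k * K := fun k => by
    have h1 := hv k u
    have h2 : pen Q F D r (s k) u = s k * (f + s k * K) := by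
      simp only [pen, ← hr, ← hf, huF, ← hK]
      ring
    rw [h2, ← hst] at h1
    exact le_of_mul_le_mul_left h1 (hs0 k)
  have hlow : ∀ k, s k * MvPolynomial.eval (v k) Q + MvPolynomial.eval (v k) F
      + (∑ i, v k i ^ 2 - r) ^ 2 ≤ s k * t k := fun k => by
    rw [hst]; exact aux_pen_lower Q F hQ D r (s k) (v k)
  have hQt : ∀ k, MvPolynomial.eval (v k) Q ≤ t k := fun k => by
    refine le_of_mul_le_mul_left ?_ (hs0 k)
    have := hlow k
    have := hF (v k)
    have := sq_nonneg (∑ i, v k i ^ 2 - r)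
    linarith
  have hsmall : ∀ k, MvPolynomial.eval (v k) F + (∑ i, v k i ^ 2 - r) ^ 2 ≤ s k * (f + K) := by
    intro k
    have h1 := hlow k
    have h2 := mul_nonneg (hs0 k).le (hQ (v k))
    have h3 : t k ≤ f + K := by
      have := mul_le_of_le_one_left hK0 (hs1 k)
      have := hup k
      linarith
    have := mul_le_mul_of_nonneg_left h3 (hs0 k).le
    linarith
  have hbd : ∀ k, v k ∈ {v : Fin n → ℝ | ∑ i, v i ^ 2 ≤ r + 1 + (f + K)} := by
    intro k
    have h1 := hsmall k
    have h2 := hF (v k)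
    have h3 := mul_le_of_le_one_left (add_nonneg hf0 hK0) (hs1 k)
    change ∑ i, v k i ^ 2 ≤ r + 1 + (f + K)
    nlinarith
  obtain ⟨w, -, φ, hφ, hw⟩ := (aux_ball_compact (n := n) _).tendsto_subseq hbd
  have hsφ : Filter.Tendsto (fun k => s (φ k)) Filter.atTop (nhds 0) :=
    hslim.comp hφ.tendsto_atTop
  have hlimF : Filter.Tendsto (fun k => MvPolynomial.eval (v (φ k)) F) Filter.atTop
      (nhds (MvPolynomial.eval w F)) := (MvPolynomial.continuous_eval F).continuousAt.tendsto.comp hw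
  have hlimQ : Filter.Tendsto (fun k => MvPolynomial.eval (v (φ k)) Q) Filter.atTop
      (nhds (MvPolynomial.eval w Q)) := (MvPolynomial.continuous_eval Q).continuousAt.tendsto.comp hw
  have hlimN : Filter.Tendsto (fun k => (∑ i, v (φ k) i ^ 2 - r) ^ 2) Filter.atTop
      (nhds ((∑ i, w i ^ 2 - r) ^ 2)) := by
    have hc : Continuous fun v : Fin n → ℝ => (∑ i, v i ^ 2 - r) ^ 2 := by fun_prop
    exact hc.continuousAt.tendsto.comp hw
  have hlimz : Filter.Tendsto (fun k => s (φ k) * (f + K)) Filter.atTop (nhds 0) := by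
    simpa using hsφ.mul_const (f + K)
  have hle := le_of_tendsto_of_tendsto' (hlimF.add hlimN) hlimz fun k => hsmall (φ k)
  have hwF : MvPolynomial.eval w F = 0 := by
    have := hF w
    have := sq_nonneg (∑ i, w i ^ 2 - r)
    linarith
  have hwr : ∑ i, w i ^ 2 = r := by
    have h1 : (∑ i, w i ^ 2 - r) ^ 2 = 0 := by
      have := sq_nonneg (∑ i, w i ^ 2 - r)
      linarith
    have := pow_eq_zero_iff (two_ne_zero) |>.1 h1
    linarith
  have hfw := humin w hwF hwr
  have hlimU : Filter.Tendsto (fun k => f + s (φ k) * K) Filter.atTop (nhds f) := by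
    simpa using (hsφ.mul_const K).const_add f
  have hwf : MvPolynomial.eval w Q ≤ f := le_of_tendsto_of_tendsto' hlimQ hlimU
    fun k => (hQt (φ k)).trans (hup (φ k))
  have heq : MvPolynomial.eval w Q = f := le_antisymm hwf hfw
  rw [heq] at hlimQ
  have hlimt : Filter.Tendsto (fun k => t (φ k)) Filter.atTop (nhds f) :=
    tendsto_of_tendsto_of_tendsto_of_le_of_le hlimQ hlimU (fun k => hQt (φ k)) (fun k => hup (φ k))
  refine hG r f (fun k => s (φ k)) (fun k => t (φ k)) (fun k => (hs0 _).ne') hsφ hlimt fun k => ?_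
  rw [hst]
  exact hg r _ _ (hv _)

theorem aux_main {n : ℕ} (Q F : MvPolynomial (Fin n) ℝ)
    (hQ : ∀ v, 0 ≤ MvPolynomial.eval v Q) (hF : ∀ v, 0 ≤ MvPolynomial.eval v F)
    (hprop : ∀ T : ℝ, ∃ B : ℝ, ∀ v, MvPolynomial.eval v F = 0 → MvPolynomial.eval v Q ≤ T →
      ∑ i, v i ^ 2 ≤ B) :
    ∃ (C : ℝ) (d : ℕ), 0 ≤ C ∧ ∀ v, MvPolynomial.eval v F = 0 →
      ∑ i, v i ^ 2 ≤ C * (1 + MvPolynomial.eval v Q) ^ d := by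
  obtain ⟨G, hG0, hG⟩ := aux_G Q F hQ hF
  obtain ⟨C, T, d, hC, hroot⟩ := aux_root G hG0
  obtain ⟨B, hB⟩ := hprop T
  refine ⟨C + |B|, d, by positivity, fun v hv => ?_⟩
  have hone : ∀ x : ℝ, 0 ≤ x → 1 ≤ (1 + x) ^ d := fun x hx => one_le_pow₀ (by linarith)
  have hcl : IsCompact {w : Fin n → ℝ | ∑ i, w i ^ 2 ≤ ∑ i, v i ^ 2} := aux_ball_compact _
  have hcomp : IsCompact ({w : Fin n → ℝ | ∑ i, w i ^ 2 ≤ ∑ i, v i ^ 2} ∩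
      {w | MvPolynomial.eval w F = 0 ∧ ∑ i, w i ^ 2 = ∑ i, v i ^ 2}) :=
    hcl.inter_right ((isClosed_eq (MvPolynomial.continuous_eval F) continuous_const).inter
      (isClosed_eq (by fun_prop) continuous_const))
  obtain ⟨u, ⟨-, huF, hur⟩, hmin⟩ := hcomp.exists_isMinOn ⟨v, le_refl (∑ i, v i ^ 2), hv, rfl⟩
    (MvPolynomial.continuous_eval Q).continuousOn
  have huv : MvPolynomial.eval u Q ≤ MvPolynomial.eval v Q := hmin ⟨le_refl (∑ i, v i ^ 2), hv, rfl⟩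
  have hz := hG u huF fun w hwF hwr => hmin ⟨(hwr.trans hur).le, hwF, hwr.trans hur⟩
  have h1 := hone _ (hQ v)
  have hB0 := abs_nonneg B
  by_cases hT : T ≤ MvPolynomial.eval u Q
  · have h2 := hroot _ _ hT (hQ u) hz
    rw [hur] at h2
    have h3 : (1 + MvPolynomial.eval u Q) ^ d ≤ (1 + MvPolynomial.eval v Q) ^ d := by
      have := hQ u
      gcongr
    have h4 := mul_le_mul_of_nonneg_left h3 hC
    have h5 : 0 ≤ |B| * (1 + MvPolynomial.eval v Q) ^ d := by positivity
    linarith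
  · have h2 := hB u huF (not_le.1 hT).le
    rw [hur] at h2
    have h3 := le_abs_self B
    have h4 : 0 ≤ C * (1 + MvPolynomial.eval v Q) ^ d := by positivity
    nlinarith

theorem aux_F {n : ℕ} (BV : Set (MvPolynomial (Fin n) ℝ)) : ∃ F : MvPolynomial (Fin n) ℝ,
    (∀ v, 0 ≤ MvPolynomial.eval v F) ∧
      ∀ v, MvPolynomial.eval v F = 0 ↔ ∀ p ∈ BV, MvPolynomial.eval v p = 0 := by
  obtain ⟨S, hS⟩ : (Ideal.span BV).FG := IsNoetherian.noetherian _
  refine ⟨∑ p ∈ S, p ^ 2, fun v => ?_, fun v => ?_⟩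
  · simp only [map_sum, map_pow]
    positivity
  · have key : ∀ A : Set (MvPolynomial (Fin n) ℝ), (∀ p ∈ A, MvPolynomial.eval v p = 0) ↔
        Ideal.span A ≤ RingHom.ker (MvPolynomial.eval v) := by
      intro A
      rw [Ideal.span_le]
      rfl
    rw [key BV, ← hS]
    rw [← key]
    simp only [map_sum, map_pow]
    rw [Finset.sum_eq_zero_iff_of_nonneg fun _ _ => sq_nonneg _]
    simp

/-- **Polynomial bound along a proper algebraic map.**
Let `V ⊆ ℝⁿ` and `W ⊆ ℝᵐ` be real algebraic sets (zero sets of families `BV`, `BW` of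
polynomials) and let `π : V(ℝ) → W(ℝ)` be a proper algebraic map (given by polynomials `q`,
with preimages of compact sets compact for the Euclidean topologies).  Then there exist
constants `c, d ∈ ℕ` such that for every `v ∈ V` and every coordinate function `xᵢ`,
`|xᵢ(v)| ≤ c * (1 + N(π(v))²)^d`, where `N(s) = √(s₁² + ⋯ + sₘ²)` is the Euclidean norm. -/
theorem polynomial_bound_of_proper_algebraic_map
    (n m : ℕ)
    (BV : Set (MvPolynomial (Fin n) ℝ)) (BW : Set (MvPolynomial (Fin m) ℝ))
    (V : Set (Fin n → ℝ)) (W : Set (Fin m → ℝ))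
    (hV : V = {v | ∀ p ∈ BV, MvPolynomial.eval v p = 0})
    (hW : W = {w | ∀ p ∈ BW, MvPolynomial.eval w p = 0})
    (q : Fin m → MvPolynomial (Fin n) ℝ)
    (π : (Fin n → ℝ) → (Fin m → ℝ))
    (hπ : ∀ v, π v = fun j => MvPolynomial.eval v (q j))
    (hmaps : ∀ v ∈ V, π v ∈ W)
    (hproper : ∀ C : Set (Fin m → ℝ), IsCompact C → IsCompact {v ∈ V | π v ∈ C}) :
    ∃ c d : ℕ, ∀ v ∈ V, ∀ i : Fin n,
      |v i| ≤ (c : ℝ) * (1 + Real.sqrt (∑ j, (π v j) ^ 2) ^ 2) ^ d := by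
  obtain ⟨F, hF, hFV⟩ := aux_F BV
  have hVF : ∀ v, v ∈ V ↔ MvPolynomial.eval v F = 0 := fun v => by rw [hFV, hV]; rfl
  let Q : MvPolynomial (Fin n) ℝ := ∑ j, q j ^ 2
  have hQe : ∀ v, MvPolynomial.eval v Q = ∑ j, π v j ^ 2 := fun v => by simp [Q, hπ]
  have hQ : ∀ v, 0 ≤ MvPolynomial.eval v Q := fun v => by rw [hQe]; positivity
  obtain ⟨C, d, hC, hb⟩ := aux_main Q F hQ hF (fun T => by
    obtain ⟨B, hB⟩ := (hproper _ (aux_ball_compact (n := m) T)).bddAbove_image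
      (f := fun v => ∑ i, v i ^ 2) (Continuous.continuousOn (by fun_prop))
    refine ⟨B, fun v hv hvT => hB ⟨v, ⟨(hVF v).2 hv, ?_⟩, rfl⟩⟩
    change ∑ j, π v j ^ 2 ≤ T
    rw [← hQe]
    exact hvT)
  refine ⟨⌈1 + C⌉₊, d, fun v hv i => ?_⟩
  rw [Real.sq_sqrt (by positivity), ← hQe]
  have h1 := hb v ((hVF v).1 hv)
  have h2 : v i ^ 2 ≤ ∑ i, v i ^ 2 :=
    Finset.single_le_sum (f := fun i => v i ^ 2) (fun _ _ => sq_nonneg _) (Finset.mem_univ i)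
  have h3 : |v i| ≤ 1 + v i ^ 2 := by
    rw [← sq_abs]
    nlinarith [sq_nonneg (|v i| - 1), abs_nonneg (v i)]
  have h4 : 1 ≤ (1 + MvPolynomial.eval v Q) ^ d := one_le_pow₀ (by linarith [hQ v])
  have h5 := mul_le_mul_of_nonneg_right (Nat.le_ceil (1 + C)) (zero_le_one.trans h4)
  linarith
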